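/- Let Ω ⊂ ℝ^N (N ≥ 3) be a bounded open set with C² boundary and δ(x) := dist(x, ∂Ω). For every a ≥ 1 and every α > 1/2 there exist constants c > 0 and β₀ > 0 such that for every β ∈ (0,β₀) and every y ∈ ℝ^N: ∫_{Σ_β ∩ {x : |x−y| ≥ aβ}} |x−y|^{2−N−2α} dH^{N−1}(x) ≤ c β^{1−2α}. -/

import Mathlib

open MeasureTheory Metric Set

/-- `Ω` has `C²` boundary: near each boundary point, `Ω` coincides with the strict
sublevel set of a `C²` function with nonvanishing derivative. -/
def HasC2Boundary {N : ℕ} (Ω : Set (EuclideanSpace ℝ (Fin N))) : Prop :=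
  ∀ p ∈ frontier Ω, ∃ (U : Set (EuclideanSpace ℝ (Fin N)))
    (f : EuclideanSpace ℝ (Fin N) → ℝ),
    IsOpen U ∧ p ∈ U ∧ ContDiffOn ℝ 2 f U ∧ (∀ x ∈ U, fderiv ℝ f x ≠ 0) ∧
    Ω ∩ U = {x ∈ U | f x < 0}

open scoped NNReal ENNReal Topology

/-- If all chords of `A` make an angle of at least `π/3` with `g`, then `A` is a `2`-bi-Lipschitz
graph over the hyperplane orthogonal to `g`, hence upper Ahlfors regular of dimension `N - 1`. -/
lemma exists_hausdorffMeasure_inter_ball_le_of_abs_inner_le {N : ℕ} (hN : 1 ≤ N)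
    {g : EuclideanSpace ℝ (Fin N)} (hg : g ≠ 0) :
    ∃ C : ℝ≥0, ∀ A : Set (EuclideanSpace ℝ (Fin N)),
      (∀ x ∈ A, ∀ x' ∈ A, |inner ℝ g (x' - x)| ≤ ‖g‖ / 2 * ‖x' - x‖) →
      ∀ (y : EuclideanSpace ℝ (Fin N)) (r : ℝ), 0 < r →
        μH[(N : ℝ) - 1] (A ∩ ball y r) ≤ C * ENNReal.ofReal (r ^ ((N : ℝ) - 1)) := by
  obtain ⟨n, rfl⟩ : ∃ n, N = n + 1 := ⟨N - 1, by omega⟩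
  set V := (ℝ ∙ g)ᗮ
  have : Fact (Module.finrank ℝ (EuclideanSpace ℝ (Fin (n + 1))) = n + 1) := ⟨by simp⟩
  have hV : Module.finrank ℝ V = n := Submodule.finrank_orthogonal_span_singleton hg
  have hHaar : Measure.IsAddHaarMeasure (μH[(n : ℝ)] : Measure V) := by
    have := isAddHaarMeasure_hausdorffMeasure (E := V)
    rwa [hV] at this
  have hfin : (μH[(n : ℝ)] : Measure V) (ball 0 1) ≠ ∞ := measure_ball_lt_top.ne
  have hd : ((n + 1 : ℕ) : ℝ) - 1 = n := by push_cast; ring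
  refine ⟨2 ^ n * ((μH[(n : ℝ)] : Measure V) (ball 0 1)).toNNReal, fun A hA y r hr => ?_⟩
  rw [hd]
  set P := V.orthogonalProjectionOnto
  have hanti : AntilipschitzWith 2 (fun x : A => P x) := by
    refine AntilipschitzWith.of_le_mul_dist fun x x' => ?_
    rw [Subtype.dist_eq, dist_eq_norm, dist_eq_norm, ← map_sub]
    set v := (x : EuclideanSpace ℝ (Fin (n + 1))) - x'
    have h1 : |inner ℝ g v| ≤ ‖g‖ / 2 * ‖v‖ := hA x' x'.2 x x.2
    have h2 : ‖v‖ ^ 2 = ‖(ℝ ∙ g).starProjection v‖ ^ 2 + ‖P v‖ ^ 2 :=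
      Submodule.norm_sq_eq_add_norm_sq_projection v (ℝ ∙ g)
    have hgpos : 0 < ‖g‖ := norm_pos_iff.2 hg
    have h3 : ‖(ℝ ∙ g).starProjection v‖ ≤ ‖v‖ / 2 := by
      rw [Submodule.starProjection_singleton, norm_smul, Real.norm_eq_abs, abs_div]
      simp only [RCLike.ofReal_real_eq_id, id, abs_pow, abs_norm]
      rw [div_mul_eq_mul_div, div_le_iff₀ (by positivity)]
      nlinarith
    have h4 : (0 : ℝ) ≤ ‖(ℝ ∙ g).starProjection v‖ := norm_nonneg _
    refine abs_le_of_sq_le_sq' ?_ (by positivity) |>.2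
    simp only [NNReal.coe_ofNat]
    nlinarith [norm_nonneg v]
  calc μH[(n : ℝ)] (A ∩ ball y r)
      = μH[(n : ℝ)] (Subtype.val '' ((Subtype.val : A → _) ⁻¹' ball y r)) := by
        rw [Subtype.image_preimage_coe]
    _ = μH[(n : ℝ)] ((Subtype.val : A → _) ⁻¹' ball y r) :=
        isometry_subtype_coe.hausdorffMeasure_image (Or.inl (by positivity)) _
    _ ≤ ((2 : ℝ≥0) : ℝ≥0∞) ^ (n : ℝ) *
          μH[(n : ℝ)] ((fun x : A => P x) '' ((Subtype.val : A → _) ⁻¹' ball y r)) :=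
        hanti.le_hausdorffMeasure_image (by positivity) _
    _ ≤ ((2 : ℝ≥0) : ℝ≥0∞) ^ (n : ℝ) * μH[(n : ℝ)] (ball (P y) r) := by
        gcongr
        rintro _ ⟨x, hx, rfl⟩
        rw [mem_ball, dist_eq_norm, ← map_sub]
        refine (V.norm_orthogonalProjectionOnto_apply_le _).trans_lt ?_
        simpa [dist_eq_norm] using hx
    _ = _ := by
        rw [Measure.addHaar_ball_of_pos _ _ hr, hV]
        push_cast
        rw [ENNReal.coe_toNNReal hfin, ENNReal.rpow_natCast, Real.rpow_natCast]
        ring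

/-- A ball around a point of `Ω` that misses the boundary is contained in `Ω`. -/
lemma ball_infDist_frontier_subset {E : Type*} [NormedAddCommGroup E] [NormedSpace ℝ E]
    {Ω : Set E} {x : E} (hx : x ∈ Ω) : ball x (infDist x (frontier Ω)) ⊆ Ω := by
  intro z hz
  by_contra hzΩ
  have hpos : 0 < infDist x (frontier Ω) := pos_of_mem_ball hz
  have hsep : ∀ w ∈ ball x (infDist x (frontier Ω)), w ∈ interior Ω ∨ w ∈ (closure Ω)ᶜ := by
    intro w hw
    by_contra! h
    have := infDist_le_dist_of_mem (x := x) (show w ∈ frontier Ω from ⟨not_not.1 h.2, h.1⟩)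
    rw [mem_ball, dist_comm] at hw
    linarith
  obtain ⟨w, -, hwi, hwc⟩ := (convex_ball x (infDist x (frontier Ω))).isPreconnected
    (interior Ω) (closure Ω)ᶜ isOpen_interior isClosed_closure.isOpen_compl hsep
    ⟨x, mem_ball_self hpos, (hsep x (mem_ball_self hpos)).resolve_right
      (not_not.2 (subset_closure hx))⟩
    ⟨z, hz, (hsep z hz).resolve_left fun h => hzΩ (interior_subset h)⟩
  exact hwc (interior_subset_closure hwi)

/-- If `Ω` is stable near `p` under translation by an open set `K` of vectors, then inside the level
sets of the distance to the boundary no two points near `p` differ by a vector of `K`. -/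
lemma sub_notMem_of_infDist_frontier_eq {E : Type*} [NormedAddCommGroup E] [NormedSpace ℝ E]
    [ProperSpace E] {Ω K : Set E} (hΩ : IsOpen Ω) (hK : IsOpen K) {p : E} {ρ : ℝ}
    (hstable : ∀ q ∈ Ω ∩ ball p (2 * ρ), ∀ q' ∈ ball p (2 * ρ), q' - q ∈ K → q' ∈ Ω)
    {β : ℝ} (hβ : 0 < β) (hβρ : β < ρ) {x x' : E}
    (hx : x ∈ Ω) (hxp : x ∈ ball p ρ) (hxβ : infDist x (frontier Ω) = β)
    (hxp' : x' ∈ ball p ρ) (hxβ' : infDist x' (frontier Ω) = β) :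
    x' - x ∉ K := by
  intro hv
  have hne : (frontier Ω).Nonempty := by
    by_contra h
    rw [not_nonempty_iff_eq_empty] at h
    rw [h, infDist_empty] at hxβ
    exact hβ.ne hxβ
  obtain ⟨z, hz, hzd⟩ := isClosed_frontier.exists_infDist_eq_dist hne x'
  have hzΩ : z ∉ Ω := fun h => by
    rw [hΩ.frontier_eq] at hz
    exact hz.2 h
  have hzx : ‖z - x'‖ = β := by rw [← dist_eq_norm, dist_comm, ← hzd, hxβ']
  have hcont : Filter.Tendsto (fun t : ℝ => x' - x + t • (z - x')) (𝓝[>] 0) (𝓝 (x' - x)) := by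
    have : Continuous (fun t : ℝ => x' - x + t • (z - x')) := by fun_prop
    have h := this.tendsto 0
    simp only [zero_smul, add_zero] at h
    exact h.mono_left nhdsWithin_le_nhds
  obtain ⟨t, htK, ht0, ht1⟩ := ((hcont.eventually (hK.mem_nhds hv)).and
    (Ioo_mem_nhdsGT (zero_lt_one' ℝ))).exists
  set q := x + (1 - t) • (z - x') with hq
  have hqx : dist q x < β := by
    rw [hq, dist_eq_norm, add_sub_cancel_left, norm_smul, hzx, Real.norm_eq_abs,
      abs_of_pos (by linarith)]
    nlinarith
  refine hzΩ (hstable q ⟨?_, ?_⟩ z ?_ ?_)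
  · exact ball_infDist_frontier_subset hx (by rwa [hxβ])
  · rw [mem_ball] at *
    linarith [dist_triangle q x p]
  · rw [mem_ball] at *
    linarith [dist_triangle z x' p, dist_eq_norm z x']
  · have hzq : z - q = x' - x + t • (z - x') := by
      rw [hq]
      module
    exact hzq ▸ htK

/-- Near a boundary point, the level sets of the distance to a `C²` boundary are upper Ahlfors
regular of dimension `N - 1`, uniformly in the level. -/
lemma HasC2Boundary.exists_hausdorffMeasure_inter_ball_le_local {N : ℕ} (hN : 1 ≤ N)
    {Ω : Set (EuclideanSpace ℝ (Fin N))} (hΩo : IsOpen Ω) (hΩ2 : HasC2Boundary Ω)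
    {p : EuclideanSpace ℝ (Fin N)} (hp : p ∈ frontier Ω) :
    ∃ (C : ℝ≥0) (ρ : ℝ), 0 < ρ ∧ ∀ β ∈ Ioo 0 ρ, ∀ (y : EuclideanSpace ℝ (Fin N)) (r : ℝ), 0 < r →
      μH[(N : ℝ) - 1] ({x ∈ Ω | infDist x (frontier Ω) = β} ∩ ball p ρ ∩ ball y r) ≤
        C * ENNReal.ofReal (r ^ ((N : ℝ) - 1)) := by
  obtain ⟨U, f, hU, hpU, hf, hf0, hΩU⟩ := hΩ2 p hp
  set g := (InnerProductSpace.toDual ℝ (EuclideanSpace ℝ (Fin N))).symm (fderiv ℝ f p) with hgdef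
  have hgv : ∀ v, fderiv ℝ f p v = inner ℝ g v := fun v => by simp [hgdef]
  have hg : g ≠ 0 := by simpa [hgdef] using hf0 p hpU
  have hstrict : HasStrictFDerivAt f (fderiv ℝ f p) p :=
    (hf.contDiffAt (hU.mem_nhds hpU)).hasStrictFDerivAt (by norm_num)
  have hη : (0 : ℝ≥0) < ‖g‖₊ / 2 := half_pos (nnnorm_pos.2 hg)
  obtain ⟨s, hs, happrox⟩ := hstrict.approximates_deriv_on_nhds (Or.inr hη)
  obtain ⟨R, hR, hRs⟩ := Metric.mem_nhds_iff.1 (Filter.inter_mem hs (hU.mem_nhds hpU))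
  obtain ⟨C, hC⟩ := exists_hausdorffMeasure_inter_ball_le_of_abs_inner_le hN hg
  refine ⟨C, R / 2, by positivity, fun β hβ y r hr => hC _ ?_ y r hr⟩
  set K : Set (EuclideanSpace ℝ (Fin N)) := {v | inner ℝ g v < -(‖g‖ / 2 * ‖v‖)}
  have hK : IsOpen K := isOpen_lt (by fun_prop) (by fun_prop)
  have hstable : ∀ q ∈ Ω ∩ ball p (2 * (R / 2)), ∀ q' ∈ ball p (2 * (R / 2)),
      q' - q ∈ K → q' ∈ Ω := by
    rw [mul_div_cancel₀ R two_ne_zero]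
    rintro q ⟨hqΩ, hq⟩ q' hq' hv
    have hfq : f q < 0 := (hΩU.subset ⟨hqΩ, (hRs hq).2⟩).2
    have h := (Real.norm_eq_abs _ ▸ happrox _ (hRs hq').1 _ (hRs hq).1 :)
    have h' := (abs_le.1 h).2
    rw [hgv] at h'
    push_cast at h'
    have hv' : inner ℝ g (q' - q) < -(‖g‖ / 2 * ‖q' - q‖) := hv
    exact (hΩU.superset ⟨(hRs hq').2, by linarith⟩).1
  have key : ∀ x ∈ {x ∈ Ω | infDist x (frontier Ω) = β} ∩ ball p (R / 2),
      ∀ x' ∈ {x ∈ Ω | infDist x (frontier Ω) = β} ∩ ball p (R / 2),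
      -(‖g‖ / 2 * ‖x' - x‖) ≤ inner ℝ g (x' - x) := fun x hx x' hx' =>
    not_lt.1 (sub_notMem_of_infDist_frontier_eq hΩo hK hstable hβ.1 hβ.2 hx.1.1 hx.2 hx.1.2
      hx'.2 hx'.1.2)
  intro x hx x' hx'
  refine abs_le.2 ⟨key x hx x' hx', ?_⟩
  have h := key x' hx' x hx
  rw [← neg_sub x' x, inner_neg_right, norm_neg] at h
  linarith

/-- The level sets of the distance to a compact `C²` boundary are upper Ahlfors regular of dimension
`N - 1`, uniformly for small levels. -/
lemma HasC2Boundary.exists_hausdorffMeasure_inter_ball_le {N : ℕ} (hN : 1 ≤ N)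
    {Ω : Set (EuclideanSpace ℝ (Fin N))} (hΩo : IsOpen Ω) (hΩb : Bornology.IsBounded Ω)
    (hΩ2 : HasC2Boundary Ω) :
    ∃ (C : ℝ≥0) (ρ : ℝ), 0 < ρ ∧ ∀ β ∈ Ioo 0 ρ, ∀ (y : EuclideanSpace ℝ (Fin N)) (r : ℝ), 0 < r →
      μH[(N : ℝ) - 1] ({x ∈ Ω | infDist x (frontier Ω) = β} ∩ ball y r) ≤
        C * ENNReal.ofReal (r ^ ((N : ℝ) - 1)) := by
  have hcomp : IsCompact (frontier Ω) :=
    isCompact_of_isClosed_isBounded isClosed_frontier (hΩb.closure.subset frontier_subset_closure)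
  obtain ⟨V, hVo, hV, C, ρ, hρ, hCρ⟩ : ∃ V, IsOpen V ∧ frontier Ω ⊆ V ∧ ∃ (C : ℝ≥0) (ρ : ℝ), 0 < ρ ∧
      ∀ β ∈ Ioo 0 ρ, ∀ (y : EuclideanSpace ℝ (Fin N)) (r : ℝ), 0 < r →
      μH[(N : ℝ) - 1] ({x ∈ Ω | infDist x (frontier Ω) = β} ∩ V ∩ ball y r) ≤
        C * ENNReal.ofReal (r ^ ((N : ℝ) - 1)) := by
    refine hcomp.induction_on (p := fun S => ∃ V, IsOpen V ∧ S ⊆ V ∧ ∃ (C : ℝ≥0) (ρ : ℝ), 0 < ρ ∧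
      ∀ β ∈ Ioo 0 ρ, ∀ (y : EuclideanSpace ℝ (Fin N)) (r : ℝ), 0 < r →
      μH[(N : ℝ) - 1] ({x ∈ Ω | infDist x (frontier Ω) = β} ∩ V ∩ ball y r) ≤
        C * ENNReal.ofReal (r ^ ((N : ℝ) - 1))) ?_ ?_ ?_ ?_
    · exact ⟨∅, isOpen_empty, Subset.rfl, 0, 1, one_pos, by simp⟩
    · rintro S T hST ⟨V, hVo, hTV, h⟩
      exact ⟨V, hVo, hST.trans hTV, h⟩
    · rintro S T ⟨V, hVo, hSV, C, ρ, hρ, h⟩ ⟨V', hVo', hTV', C', ρ', hρ', h'⟩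
      refine ⟨V ∪ V', hVo.union hVo', union_subset_union hSV hTV', C + C', min ρ ρ', lt_min hρ hρ',
        fun β hβ y r hr => ?_⟩
      rw [inter_union_distrib_left, union_inter_distrib_right, ENNReal.coe_add, add_mul]
      exact (measure_union_le _ _).trans (add_le_add
        (h β ⟨hβ.1, hβ.2.trans_le (min_le_left _ _)⟩ y r hr)
        (h' β ⟨hβ.1, hβ.2.trans_le (min_le_right _ _)⟩ y r hr))
    · intro p hp
      obtain ⟨C, ρ, hρ, h⟩ := hΩ2.exists_hausdorffMeasure_inter_ball_le_local hN hΩo hp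
      exact ⟨ball p ρ, mem_nhdsWithin_of_mem_nhds (ball_mem_nhds p hρ),
        ball p ρ, isOpen_ball, Subset.rfl, C, ρ, hρ, h⟩
  obtain ⟨ε, hε, hεV⟩ := hcomp.exists_thickening_subset_open hVo hV
  refine ⟨C, min ρ ε, lt_min hρ hε, fun β hβ y r hr => le_trans (measure_mono ?_)
    (hCρ β ⟨hβ.1, hβ.2.trans_le (min_le_left _ _)⟩ y r hr)⟩
  rintro x ⟨hx, hxy⟩
  refine ⟨⟨hx, hεV ?_⟩, hxy⟩
  have hne : (frontier Ω).Nonempty := by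
    by_contra h
    have h0 := hx.2
    rw [not_nonempty_iff_eq_empty.1 h, infDist_empty] at h0
    exact hβ.1.ne h0
  rw [mem_thickening_iff_infDist_lt hne, hx.2]
  exact hβ.2.trans_le (min_le_right _ _)

/-- Dyadic decomposition: a measure that is upper Ahlfors regular of dimension `d` at `y` integrates
`|x - y| ^ (-s)` with `s > d` away from `y`, with the expected decay. -/
lemma lintegral_dist_rpow_le_of_measure_ball_le {E : Type*} [PseudoMetricSpace E]
    [MeasurableSpace E] [OpensMeasurableSpace E] {μ : Measure E} {y : E} {C : ℝ≥0} {d s t : ℝ}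
    (hs : 0 ≤ s) (hds : d < s) (hμ : ∀ r, 0 < r → μ (ball y r) ≤ C * ENNReal.ofReal (r ^ d))
    (ht : 0 < t) :
    ∫⁻ x in {x | t ≤ dist x y}, ENNReal.ofReal (dist x y ^ (-s)) ∂μ ≤
      ENNReal.ofReal (C * 2 ^ d * (1 - 2 ^ (d - s))⁻¹ * t ^ (d - s)) := by
  set S : ℕ → Set E := fun k => {x | t * 2 ^ k ≤ dist x y} ∩ ball y (t * 2 ^ (k + 1))
  have hS : ∀ k, MeasurableSet (S k) := fun k =>
    ((isClosed_le (by fun_prop) (by fun_prop)).measurableSet).inter isOpen_ball.measurableSet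
  have hcover : {x | t ≤ dist x y} ⊆ ⋃ k, S k := by
    intro x hx
    obtain ⟨k, hk, hk'⟩ := exists_nat_pow_near ((one_le_div ht).2 hx) one_lt_two
    rw [le_div_iff₀' ht] at hk
    rw [div_lt_iff₀' ht] at hk'
    exact mem_iUnion.2 ⟨k, hk, hk'⟩
  have hq0 : (0 : ℝ) < 2 ^ (d - s) := by positivity
  have hq1 : (2 : ℝ) ^ (d - s) < 1 := Real.rpow_lt_one_of_one_lt_of_neg one_lt_two (by linarith)
  have hterm : ∀ k, ∫⁻ x in S k, ENNReal.ofReal (dist x y ^ (-s)) ∂μ ≤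
      ENNReal.ofReal (C * 2 ^ d * t ^ (d - s) * (2 ^ (d - s)) ^ k) := by
    intro k
    have h2k : (0 : ℝ) < 2 ^ k := by positivity
    calc ∫⁻ x in S k, ENNReal.ofReal (dist x y ^ (-s)) ∂μ
        ≤ ∫⁻ _ in S k, ENNReal.ofReal ((t * 2 ^ k) ^ (-s)) ∂μ := by
          refine setLIntegral_mono' (hS k) fun x hx => ENNReal.ofReal_le_ofReal ?_
          exact Real.rpow_le_rpow_of_nonpos (by positivity) hx.1 (by linarith)
      _ = ENNReal.ofReal ((t * 2 ^ k) ^ (-s)) * μ (S k) := setLIntegral_const _ _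
      _ ≤ ENNReal.ofReal ((t * 2 ^ k) ^ (-s)) * (C * ENNReal.ofReal ((t * 2 ^ (k + 1)) ^ d)) := by
          gcongr
          exact (measure_mono inter_subset_right).trans (hμ _ (by positivity))
      _ = ENNReal.ofReal (C * 2 ^ d * t ^ (d - s) * (2 ^ (d - s)) ^ k) := by
          rw [← ENNReal.ofReal_coe_nnreal, ← ENNReal.ofReal_mul (by positivity),
            ← ENNReal.ofReal_mul (by positivity)]
          congr 1
          have e1 : ((2 : ℝ) ^ (d - s)) ^ k = (2 ^ k) ^ (d - s) := by
            rw [← Real.rpow_natCast, ← Real.rpow_natCast, ← Real.rpow_mul (by norm_num),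
              ← Real.rpow_mul (by norm_num), mul_comm]
          have e2 : (t * 2 ^ (k + 1)) ^ d = (t * 2 ^ k) ^ d * 2 ^ d := by
            rw [← Real.mul_rpow (by positivity) (by norm_num), pow_succ, mul_assoc]
          have e3 : t ^ (d - s) * (2 ^ k) ^ (d - s) = (t * 2 ^ k) ^ d * (t * 2 ^ k) ^ (-s) := by
            rw [← Real.mul_rpow ht.le h2k.le, ← Real.rpow_add (by positivity), sub_eq_add_neg]
          rw [e1, mul_assoc (_ * _ : ℝ), e3, e2]
          ring
  calc ∫⁻ x in {x | t ≤ dist x y}, ENNReal.ofReal (dist x y ^ (-s)) ∂μ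
      ≤ ∫⁻ x in ⋃ k, S k, ENNReal.ofReal (dist x y ^ (-s)) ∂μ := lintegral_mono_set hcover
    _ ≤ ∑' k, ∫⁻ x in S k, ENNReal.ofReal (dist x y ^ (-s)) ∂μ := lintegral_iUnion_le _ _
    _ ≤ ∑' k : ℕ, ENNReal.ofReal (C * 2 ^ d * t ^ (d - s) * (2 ^ (d - s)) ^ k) :=
        ENNReal.tsum_le_tsum hterm
    _ = ENNReal.ofReal (∑' k : ℕ, C * 2 ^ d * t ^ (d - s) * (2 ^ (d - s)) ^ k) :=
        (ENNReal.ofReal_tsum_of_nonneg (fun k => by positivity)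
          ((summable_geometric_of_lt_one hq0.le hq1).mul_left _)).symm
    _ = _ := by
        rw [tsum_mul_left, tsum_geometric_of_lt_one hq0.le hq1]
        congr 1
        ring

theorem stmt15 {N : ℕ} (hN : 3 ≤ N) (Ω : Set (EuclideanSpace ℝ (Fin N)))
    (hΩo : IsOpen Ω) (hΩb : Bornology.IsBounded Ω) (hΩ2 : HasC2Boundary Ω)
    (a α : ℝ) (ha : 1 ≤ a) (hα : 1/2 < α) :
    ∃ c : ℝ, 0 < c ∧ ∃ β₀ : ℝ, 0 < β₀ ∧
      ∀ β ∈ Set.Ioo (0:ℝ) β₀, ∀ y : EuclideanSpace ℝ (Fin N),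
        (∫⁻ x in {x ∈ Ω | Metric.infDist x (frontier Ω) = β} ∩ {x | a * β ≤ dist x y},
          ENNReal.ofReal (dist x y ^ ((2:ℝ) - N - 2 * α)) ∂(μH[(N:ℝ) - 1])) ≤
        ENNReal.ofReal (c * β ^ (1 - 2 * α)) := by
  obtain ⟨C, ρ, hρ, hC⟩ := hΩ2.exists_hausdorffMeasure_inter_ball_le (by omega) hΩo hΩb
  have hN' : (3 : ℝ) ≤ N := by exact_mod_cast hN
  have hq1 : (2 : ℝ) ^ (1 - 2 * α) < 1 :=
    Real.rpow_lt_one_of_one_lt_of_neg one_lt_two (by linarith)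
  have hq : (0 : ℝ) < (1 - 2 ^ (1 - 2 * α))⁻¹ := inv_pos.2 (by linarith)
  have ha0 : 0 < a := by linarith
  refine ⟨C * 2 ^ ((N : ℝ) - 1) * (1 - 2 ^ (1 - 2 * α))⁻¹ * a ^ (1 - 2 * α) + 1, by positivity, ρ, hρ,
    fun β hβ y => ?_⟩
  have hβ0 : 0 < β := hβ.1
  have hmeas : MeasurableSet {x | a * β ≤ dist x y} :=
    (isClosed_le (by fun_prop) (by fun_prop)).measurableSet
  have key := lintegral_dist_rpow_le_of_measure_ball_le (d := (N : ℝ) - 1) (s := N - 2 + 2 * α)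
    (μ := (μH[(N : ℝ) - 1]).restrict {x ∈ Ω | infDist x (frontier Ω) = β}) (y := y) (C := C)
    (by linarith) (by linarith)
    (fun r hr => by
      rw [Measure.restrict_apply isOpen_ball.measurableSet, inter_comm]
      exact hC β hβ y r hr) (mul_pos ha0 hβ0)
  rw [Measure.restrict_restrict hmeas, inter_comm,
    show -((N : ℝ) - 2 + 2 * α) = 2 - N - 2 * α by ring,
    show (N : ℝ) - 1 - (N - 2 + 2 * α) = 1 - 2 * α by ring] at key
  refine key.trans (ENNReal.ofReal_le_ofReal ?_)
  rw [Real.mul_rpow ha0.le hβ0.le, add_mul, ← mul_assoc]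
  exact le_add_of_nonneg_right (by positivity)
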